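/- For all real x with 0 < x < 1, the ratio arcsl(x)/(x·Φ(x⁴, 3/2, 1/4)) lies strictly between 1/8 and 1/7. -/

import Mathlib

/-- The arc lemniscate sine function: `arcsl x = ∫₀ˣ dt / √(1 - t⁴)`. -/
noncomputable def arcsl (x : ℝ) : ℝ := ∫ t in (0:ℝ)..x, 1 / Real.sqrt (1 - t ^ 4)

/-- The Lerch zeta function: `Φ(z, s, a) = ∑ₖ zᵏ / (k + a)ˢ`. -/
noncomputable def lerchPhi (z s a : ℝ) : ℝ := ∑' k : ℕ, z ^ k / ((k : ℝ) + a) ^ s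

/-!
Expanding `1 / √(1 - t⁴)` in its binomial series `∑ rₙ t⁴ⁿ`, where `rₙ = C(2n, n) / 4ⁿ`, and
integrating term by term gives `arcsl x / x = ∑ rₙ zⁿ / (4n + 1)` with `z = x⁴`. Since
`rₙ / (4n + 1) = (rₙ √(n + 1/4) / 4) · (n + 1/4) ^ (-3/2)`, the ratio in question is the mean of the
numbers `rₙ √(n + 1/4) / 4` with weights `zⁿ / (n + 1/4) ^ (3/2)`. These numbers increase strictly
from `1/8` to `1 / (4√π)`, the limit being Wallis' product, and `1 / (4√π) < 1/7`.
-/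

open Filter Topology Set MeasureTheory

theorem div_mem_Ioo_of_hasSum_mul {ι : Type*} {w b : ι → ℝ} {S T A B : ℝ}
    (hS : HasSum (fun i => w i * b i) S) (hT : HasSum b T) (hb : ∀ i, 0 < b i)
    (hw : ∀ i, w i ∈ Icc A B) (hA : ∃ i, A < w i) (hB : ∃ i, w i < B) :
    S / T ∈ Ioo A B := by
  obtain ⟨i, hi⟩ := hA
  obtain ⟨j, hj⟩ := hB
  have hT_pos : 0 < T := hT.tsum_eq ▸ hT.summable.tsum_pos (fun k => (hb k).le) i (hb i)
  constructor
  · rw [lt_div_iff₀ hT_pos]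
    exact hasSum_lt (fun k => mul_le_mul_of_nonneg_right (hw k).1 (hb k).le)
      (mul_lt_mul_of_pos_right hi (hb i)) (hT.mul_left A) hS
  · rw [div_lt_iff₀ hT_pos]
    exact hasSum_lt (fun k => mul_le_mul_of_nonneg_right (hw k).2 (hb k).le)
      (mul_lt_mul_of_pos_right hj (hb j)) hS (hT.mul_left B)

theorem hasSum_integral_comp_mul_pow {a : ℕ → ℝ} {f : ℝ → ℝ}
    (hf : ∀ y, |y| < 1 → HasSum (fun n => a n * y ^ n) (f y)) {m : ℕ} (hm : m ≠ 0) {z : ℝ}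
    (hz : |z| ≤ 1) (ha : Summable fun n : ℕ => a n * z ^ n / (m * n + 1)) :
    HasSum (fun n : ℕ => a n * z ^ n / (m * n + 1)) (∫ s in (0 : ℝ)..1, f (z * s ^ m)) := by
  have integral_term (c : ℝ) (n : ℕ) :
      ∫ s in Ioo (0 : ℝ) 1, c * s ^ (m * n) = c / (m * n + 1) := by
    rw [← integral_Ioc_eq_integral_Ioo, ← intervalIntegral.integral_of_le zero_le_one,
      intervalIntegral.integral_const_mul, integral_pow]
    simp [div_eq_mul_inv]
  have integral_norm_term (n : ℕ) :
      ∫ s in Ioo (0 : ℝ) 1, ‖a n * z ^ n * s ^ (m * n)‖ = ‖a n * z ^ n / (m * n + 1)‖ := by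
    rw [norm_div, Real.norm_of_nonneg (by positivity : (0 : ℝ) ≤ m * n + 1), ← integral_term]
    refine setIntegral_congr_fun measurableSet_Ioo fun s hs => ?_
    simp only [norm_mul, Real.norm_of_nonneg (pow_nonneg hs.1.le _)]
  have integrable_term (n : ℕ) :
      IntegrableOn (fun s : ℝ => a n * z ^ n * s ^ (m * n)) (Ioo 0 1) :=
    (Continuous.integrableOn_Icc (by fun_prop)).mono_set Ioo_subset_Icc_self
  have h := hasSum_integral_of_summable_integral_norm integrable_term
    (by simpa only [integral_norm_term] using ha.norm)
  simp only [integral_term] at h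
  convert! h using 1
  rw [intervalIntegral.integral_of_le zero_le_one, integral_Ioc_eq_integral_Ioo]
  refine setIntegral_congr_fun measurableSet_Ioo fun s hs => ?_
  have hs_pow : |s ^ m| < 1 := by
    rw [abs_of_nonneg (pow_nonneg hs.1.le m)]
    exact pow_lt_one₀ hs.1.le hs.2 hm
  have hzs : |z * s ^ m| < 1 := by
    rw [abs_mul]
    exact mul_lt_one_of_nonneg_of_lt_one_right hz (abs_nonneg _) hs_pow
  simpa only [mul_pow, ← pow_mul, mul_assoc] using (hf _ hzs).tsum_eq.symm

theorem succ_mul_multichoose_succ {R : Type*} [CommRing R] [BinomialRing R] (a : R) (n : ℕ) :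
    (n + 1) * Ring.multichoose a (n + 1) = (a + n) * Ring.multichoose a n := by
  have factorial_mul (k : ℕ) :
      (k.factorial : R) * Ring.multichoose a k = (ascPochhammer R k).eval a := by
    rw [← nsmul_eq_mul, Ring.factorial_nsmul_multichoose_eq_ascPochhammer,
      Polynomial.ascPochhammer_smeval_eq_eval]
  have h := factorial_mul (n + 1)
  rw [ascPochhammer_succ_eval, ← factorial_mul n, Nat.factorial_succ] at h
  push_cast at h
  have : IsAddTorsionFree R := BinomialRing.toIsAddTorsionFree
  refine nsmul_right_injective n.factorial_ne_zero ?_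
  simp only [nsmul_eq_mul]
  linear_combination h

/-- The central binomial coefficient normalized by its trivial upper bound, `C(2n, n) / 4ⁿ`: the
`n`-th Taylor coefficient of `1 / √(1 - y)` at `0`. -/
noncomputable def centralBinomRatio (n : ℕ) : ℝ := n.centralBinom / 4 ^ n

theorem centralBinomRatio_zero : centralBinomRatio 0 = 1 := by simp [centralBinomRatio]

theorem centralBinomRatio_pos (n : ℕ) : 0 < centralBinomRatio n := by
  have := n.centralBinom_pos
  unfold centralBinomRatio
  positivity

theorem centralBinomRatio_succ (n : ℕ) :
    centralBinomRatio (n + 1) = (2 * n + 1) / (2 * n + 2) * centralBinomRatio n := by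
  have h : (n + 1 : ℝ) * (n + 1).centralBinom = 2 * (2 * n + 1) * n.centralBinom := by
    exact_mod_cast n.succ_mul_centralBinom_succ
  unfold centralBinomRatio
  rw [pow_succ]
  field_simp
  linear_combination 2 * h

theorem multichoose_one_half (n : ℕ) :
    Ring.multichoose (1 / 2 : ℝ) n = centralBinomRatio n := by
  induction n with
  | zero => rw [Ring.multichoose_zero_right, centralBinomRatio_zero]
  | succ n ih =>
    have h := succ_mul_multichoose_succ (1 / 2 : ℝ) n
    rw [ih] at h
    rw [centralBinomRatio_succ]
    field_simp
    linear_combination 2 * h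

theorem hasSum_centralBinomRatio_mul_pow {y : ℝ} (hy : |y| < 1) :
    HasSum (fun n => centralBinomRatio n * y ^ n) (1 / √(1 - y)) := by
  have hy_ball : y ∈ Metric.eball (0 : ℝ) 1 := by
    simpa [← ENNReal.ofReal_one, Metric.eball_ofReal] using hy
  have h := (Real.one_div_one_sub_rpow_hasFPowerSeriesOnBall_zero (1 / 2)).hasSum hy_ball
  rw [zero_add, ← Real.sqrt_eq_rpow] at h
  convert! h using 2 with n
  simp [← multichoose_one_half, Ring.multichoose_eq, mul_comm]

theorem centralBinomRatio_sq_mul_W (n : ℕ) :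
    centralBinomRatio n ^ 2 * ((2 * n + 1) * Real.Wallis.W n) = 1 := by
  induction n with
  | zero => simp [centralBinomRatio_zero, Real.Wallis.W]
  | succ n ih =>
    refine Eq.trans ?_ ih
    rw [centralBinomRatio_succ, Real.Wallis.W_succ]
    push_cast
    field_simp
    ring

theorem strictMono_centralBinomRatio_mul_sqrt :
    StrictMono fun n : ℕ => centralBinomRatio n * √(n + 1 / 4) := by
  refine strictMono_nat_of_lt_succ fun n => ?_
  have h_sqrt : √(n + 1 / 4 : ℝ) < (2 * n + 1) / (2 * n + 2) * √((n + 1 : ℕ) + 1 / 4) := by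
    rw [Real.sqrt_lt' (by positivity), mul_pow, Real.sq_sqrt (by positivity), div_pow,
      div_mul_eq_mul_div, lt_div_iff₀ (by positivity)]
    push_cast
    linarith
  calc centralBinomRatio n * √(n + 1 / 4)
    _ < centralBinomRatio n * ((2 * n + 1) / (2 * n + 2) * √((n + 1 : ℕ) + 1 / 4)) :=
      mul_lt_mul_of_pos_left h_sqrt (centralBinomRatio_pos n)
    _ = centralBinomRatio (n + 1) * √((n + 1 : ℕ) + 1 / 4) := by
      rw [centralBinomRatio_succ]; ring

theorem tendsto_centralBinomRatio_mul_sqrt :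
    Tendsto (fun n : ℕ => centralBinomRatio n * √(n + 1 / 4)) atTop (𝓝 (1 / √Real.pi)) := by
  have h_div : Tendsto (fun n : ℕ => (1 / 4 + 1 * n : ℝ) / (1 + 2 * n)) atTop (𝓝 (1 / 2)) :=
    tendsto_add_mul_div_add_mul_atTop_nhds _ _ _ two_ne_zero
  have h := (h_div.div Real.Wallis.tendsto_W_nhds_pi_div_two (by positivity)).sqrt
  rw [show 1 / 2 / (Real.pi / 2) = 1 / Real.pi by field_simp, Real.sqrt_div zero_le_one,
    Real.sqrt_one] at h
  refine h.congr fun n => ?_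
  have hW := Real.Wallis.W_pos n
  have h_sq : centralBinomRatio n ^ 2 = 1 / ((2 * n + 1) * Real.Wallis.W n) :=
    eq_one_div_of_mul_eq_one_left (centralBinomRatio_sq_mul_W n)
  rw [← Real.sqrt_sq (centralBinomRatio_pos n).le, ← Real.sqrt_mul (sq_nonneg _), h_sq]
  congr 1
  simp only [Pi.div_apply]
  field_simp
  ring

theorem centralBinomRatio_mul_sqrt_lt (n : ℕ) :
    centralBinomRatio n * √(n + 1 / 4) < 1 / √Real.pi :=
  (strictMono_centralBinomRatio_mul_sqrt n.lt_succ_self).trans_le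
    (strictMono_centralBinomRatio_mul_sqrt.monotone.ge_of_tendsto
      tendsto_centralBinomRatio_mul_sqrt _)

theorem one_half_le_centralBinomRatio_mul_sqrt (n : ℕ) :
    1 / 2 ≤ centralBinomRatio n * √(n + 1 / 4) := by
  have h_zero : centralBinomRatio 0 * √((0 : ℕ) + 1 / 4) = 1 / 2 := by
    rw [centralBinomRatio_zero, show ((0 : ℕ) + 1 / 4 : ℝ) = (1 / 2) ^ 2 by norm_num,
      Real.sqrt_sq (by norm_num), one_mul]
  exact h_zero.symm.trans_le (strictMono_centralBinomRatio_mul_sqrt.monotone n.zero_le)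

theorem summable_lerchPhi {z s a : ℝ} (hz : |z| ≤ 1) (hs : 1 < s) (ha : 0 ≤ a) :
    Summable fun n : ℕ => z ^ n / ((n : ℝ) + a) ^ s := by
  refine ((Real.summable_one_div_nat_add_rpow a s).2 hs).of_norm_bounded fun n => ?_
  have hna : 0 ≤ (n : ℝ) + a := by positivity
  rw [norm_div, norm_pow, Real.norm_eq_abs z, abs_of_nonneg hna,
    Real.norm_of_nonneg (Real.rpow_nonneg hna s)]
  gcongr
  exact pow_le_one₀ (abs_nonneg z) hz

theorem centralBinomRatio_mul_pow_div (z : ℝ) (n : ℕ) :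
    centralBinomRatio n * z ^ n / (4 * n + 1) =
      centralBinomRatio n * √(n + 1 / 4) / 4 * (z ^ n / ((n : ℝ) + 1 / 4) ^ (3 / 2 : ℝ)) := by
  have h_pos : (0 : ℝ) < n + 1 / 4 := by positivity
  have h_rpow : ((n : ℝ) + 1 / 4) ^ (3 / 2 : ℝ) = (n + 1 / 4) * √(n + 1 / 4) := by
    rw [Real.sqrt_eq_rpow, ← Real.rpow_one_add' h_pos.le (by norm_num)]
    norm_num
  rw [h_rpow]
  field_simp

theorem summable_centralBinomRatio_mul_pow_div {z : ℝ} (hz : |z| ≤ 1) :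
    Summable fun n : ℕ => centralBinomRatio n * z ^ n / (4 * n + 1) := by
  have h_lerch := (summable_lerchPhi hz (s := 3 / 2) (a := 1 / 4) (by norm_num) (by norm_num)).norm
  refine (h_lerch.mul_left (1 / √Real.pi / 4)).of_norm_bounded fun n => ?_
  have h_pos := centralBinomRatio_pos n
  rw [centralBinomRatio_mul_pow_div, norm_mul, Real.norm_of_nonneg (by positivity)]
  gcongr
  exact (centralBinomRatio_mul_sqrt_lt n).le

theorem arcsl_eq_mul_integral (x : ℝ) :
    arcsl x = x * ∫ s in (0 : ℝ)..1, 1 / √(1 - x ^ 4 * s ^ 4) := by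
  simp_rw [← mul_pow]
  rw [intervalIntegral.mul_integral_comp_mul_left (f := fun t => 1 / √(1 - t ^ 4)), mul_zero,
    mul_one, arcsl]

theorem hasSum_arcsl_div {x : ℝ} (hx0 : x ≠ 0) (hx1 : |x| ≤ 1) :
    HasSum (fun n : ℕ => centralBinomRatio n * (x ^ 4) ^ n / (4 * n + 1)) (arcsl x / x) := by
  have hx4 : |x ^ 4| ≤ 1 := abs_pow x 4 ▸ pow_le_one₀ (abs_nonneg x) hx1
  rw [arcsl_eq_mul_integral, mul_div_cancel_left₀ _ hx0]
  exact_mod_cast hasSum_integral_comp_mul_pow (fun _ => hasSum_centralBinomRatio_mul_pow)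
    four_ne_zero hx4 (by exact_mod_cast summable_centralBinomRatio_mul_pow_div hx4)

theorem ratio_between_general (x : ℝ) (hx0 : x ≠ 0) (hx1 : |x| ≤ 1) :
    arcsl x / (x * lerchPhi (x ^ 4) (3 / 2) (1 / 4)) ∈ Ioo (1 / 8) (1 / (4 * √Real.pi)) := by
  have hx4 : |x ^ 4| ≤ 1 := abs_pow x 4 ▸ pow_le_one₀ (abs_nonneg x) hx1
  have h_arcsl := hasSum_arcsl_div hx0 hx1
  simp only [centralBinomRatio_mul_pow_div] at h_arcsl
  have h_lerch : HasSum (fun n : ℕ => (x ^ 4) ^ n / ((n : ℝ) + 1 / 4) ^ (3 / 2 : ℝ))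
      (lerchPhi (x ^ 4) (3 / 2) (1 / 4)) :=
    (summable_lerchPhi hx4 (by norm_num) (by norm_num)).hasSum
  have h_lower (n : ℕ) : 1 / 8 ≤ centralBinomRatio n * √(n + 1 / 4) / 4 := by
    linarith [one_half_le_centralBinomRatio_mul_sqrt n]
  have h_lower_one : 1 / 8 < centralBinomRatio 1 * √((1 : ℕ) + 1 / 4) / 4 := by
    linarith [one_half_le_centralBinomRatio_mul_sqrt 0,
      strictMono_centralBinomRatio_mul_sqrt zero_lt_one]
  have h_upper (n : ℕ) : centralBinomRatio n * √(n + 1 / 4) / 4 < 1 / (4 * √Real.pi) := by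
    rw [mul_comm 4, ← div_div]
    exact div_lt_div_of_pos_right (centralBinomRatio_mul_sqrt_lt n) four_pos
  rw [← div_div (arcsl x)]
  exact div_mem_Ioo_of_hasSum_mul h_arcsl h_lerch (fun n => by positivity)
    (fun n => ⟨h_lower n, (h_upper n).le⟩) ⟨1, h_lower_one⟩ ⟨0, h_upper 0⟩

theorem one_div_four_mul_sqrt_pi_lt : 1 / (4 * √Real.pi) < 1 / 7 := by
  have h : 7 / 4 < √Real.pi := Real.lt_sqrt_of_sq_lt (by linarith [Real.pi_gt_d2])
  exact one_div_lt_one_div_of_lt (by norm_num) (by linarith)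

theorem ratio_between (x : ℝ) (hx0 : 0 < x) (hx1 : x < 1) :
    1 / 8 < arcsl x / (x * lerchPhi (x ^ 4) (3 / 2) (1 / 4)) ∧
      arcsl x / (x * lerchPhi (x ^ 4) (3 / 2) (1 / 4)) < 1 / 7 := by
  obtain ⟨h_lower, h_upper⟩ := ratio_between_general x hx0.ne' ((abs_of_pos hx0).trans_le hx1.le)
  exact ⟨h_lower, h_upper.trans one_div_four_mul_sqrt_pi_lt⟩
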